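/- arXiv:2412.02523 — 2 statements merged into one kernel-verified Lean document; each statement's English description precedes it below -/
import Mathlib

section
/- Let α₁,…,α_m and β₁,…,β_n be rational numbers, none of which is a nonpositive integer, and suppose m > n + 1. Then for every prime p such that all of the α_i and β_j lie in ℤ_p, the series ₘF_n(α;β;z) is p-adically bounded. -/
/-!
Write `v` for the `p`-adic valuation. For `x ∈ ℤ_p` the quotient `(x)_k / k!` is, up to sign, a
binomial coefficient, hence lies in `ℤ_p`, so `v((α_i)_k) ≥ v(k!)` (`le_val_ascPochhammer`).

Conversely `v((β_j)_k)` exceeds `v(k!)` by at most a logarithm of `k`. Choose `i₀ < k` for which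
`v(β + i₀)` is maximal. For every other `i < k`, `v(β + i) ≤ v((β + i) - (β + i₀)) = v(i - i₀)`,
so that `v((β)_k) ≤ v(β + i₀) + v(i₀! (k - 1 - i₀)!) ≤ v(β + i₀) + v(k!)`
(`val_ascPochhammer_le`), and `p ^ v(β + i₀)` is at most a linear function of `k`
(`pow_toNat_val_add_le`). Since `v(k!) ≥ ⌊k / p⌋`, the excess is smaller than any fixed positive
multiple of `v(k!)` up to a constant (`exists_mul_val_excess_le`). Altogether
`v(A_k) ≥ (m - 1) v(k!) - n v(k!) - (v(k!) + C) ≥ -C` because `m - 1 ≥ n + 1`.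
-/

open scoped BigOperators

/-- The coefficient `A_k` of the generalized hypergeometric series
`ₘFₙ(α;β;z) = Σ A_k z^k`. -/
noncomputable def hgCoeff (m n : ℕ) (α : Fin m → ℚ) (β : Fin n → ℚ) (k : ℕ) : ℚ :=
  (∏ i, (ascPochhammer ℚ k).eval (α i)) /
    ((∏ j, (ascPochhammer ℚ k).eval (β j)) * (k.factorial : ℚ))

lemma eval_ascPochhammer_eq_prod (x : ℚ) (k : ℕ) :
    (ascPochhammer ℚ k).eval x = ∏ i ∈ Finset.range k, (x + i) := by
  induction k with
  | zero => simp
  | succ k ih => rw [ascPochhammer_succ_eval, Finset.prod_range_succ, ih]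

lemma add_natCast_ne_zero_of_not_nonpos {x : ℚ} (hx : ¬ ∃ z : ℤ, z ≤ 0 ∧ x = (z : ℚ)) (i : ℕ) :
    x + i ≠ 0 := fun h =>
  hx ⟨-(i : ℤ), by simp, by push_cast; linarith⟩

lemma eval_ascPochhammer_ne_zero {x : ℚ} (hx : ∀ i : ℕ, x + i ≠ 0) (k : ℕ) :
    (ascPochhammer ℚ k).eval x ≠ 0 := by
  rw [eval_ascPochhammer_eq_prod]
  exact Finset.prod_ne_zero_iff.2 fun i _ => hx i

lemma padicValRat_finset_prod {ι : Type*} (p : ℕ) [Fact p.Prime] (s : Finset ι) (f : ι → ℚ)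
    (hf : ∀ i ∈ s, f i ≠ 0) :
    padicValRat p (∏ i ∈ s, f i) = ∑ i ∈ s, padicValRat p (f i) := by
  classical
  induction s using Finset.induction_on with
  | empty => simp
  | insert a s ha ih =>
    rw [Finset.prod_insert ha, Finset.sum_insert ha, padicValRat.mul (hf a (by simp))
      (Finset.prod_ne_zero_iff.2 fun i hi => hf i (Finset.mem_insert_of_mem hi)),
      ih fun i hi => hf i (Finset.mem_insert_of_mem hi)]

lemma padicValRat_factorial (p : ℕ) [Fact p.Prime] (k : ℕ) :
    padicValRat p (k.factorial : ℚ) = ∑ i ∈ Finset.range k, padicValRat p ((i + 1 : ℕ) : ℚ) := by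
  rw [← padicValRat_finset_prod p _ _ fun i _ => by positivity,
    ← Finset.prod_range_add_one_eq_factorial]
  push_cast
  rfl

lemma padicValRat_natCast_le_of_dvd (p : ℕ) [Fact p.Prime] {a b : ℕ} (hb : b ≠ 0) (h : a ∣ b) :
    padicValRat p (a : ℚ) ≤ padicValRat p (b : ℚ) := by
  rw [padicValRat.of_nat, padicValRat.of_nat, Nat.cast_le, ← padicValNat_dvd_iff_le hb]
  exact pow_padicValNat_dvd.trans h

lemma div_le_padicValRat_factorial (p : ℕ) [Fact p.Prime] (k : ℕ) :
    ((k / p : ℕ) : ℤ) ≤ padicValRat p (k.factorial : ℚ) := by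
  refine le_trans ?_ (padicValRat_natCast_le_of_dvd p (Nat.factorial_ne_zero k)
    (Nat.factorial_dvd_factorial (Nat.mul_div_le k p)))
  rw [padicValRat.of_nat, padicValNat_factorial_mul]
  omega

/-- `(x)_k / k!` is a `p`-adic integer when `x` is. -/
lemma le_val_ascPochhammer (p : ℕ) [Fact p.Prime] {x : ℚ} (hx : ∀ i : ℕ, x + i ≠ 0)
    (hxp : ‖((x : ℚ) : ℚ_[p])‖ ≤ 1) (k : ℕ) :
    padicValRat p (k.factorial : ℚ) ≤ padicValRat p ((ascPochhammer ℚ k).eval x) := by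
  obtain ⟨y, hy⟩ : ∃ y : ℤ_[p], (y : ℚ_[p]) = x := ⟨⟨x, hxp⟩, rfl⟩
  have h := PadicInt.norm_ascPochhammer_le k y
  have e : (((ascPochhammer ℤ_[p] k).eval y : ℤ_[p]) : ℚ_[p]) =
      (((ascPochhammer ℚ k).eval x : ℚ) : ℚ_[p]) := by
    clear h
    induction k with
    | zero => simp
    | succ k ih =>
      rw [ascPochhammer_succ_eval, ascPochhammer_succ_eval]
      push_cast
      rw [ih, hy]
  have e' : ((k.factorial : ℤ_[p]) : ℚ_[p]) = (((k.factorial : ℚ)) : ℚ_[p]) := by push_cast; rfl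
  rw [PadicInt.norm_def, PadicInt.norm_def, e, e', Padic.eq_padicNorm, Padic.eq_padicNorm,
    padicNorm.eq_zpow_of_nonzero (eval_ascPochhammer_ne_zero hx k),
    padicNorm.eq_zpow_of_nonzero (by positivity), Rat.cast_le,
    zpow_le_zpow_iff_right₀ (by exact_mod_cast (Fact.out : p.Prime).one_lt)] at h
  linarith

/-- If `v(y) ≤ v(y')`, then `v(y) ≤ v(y - y')`; the difference `d` may be taken with either sign. -/
lemma val_le_val_of_sub_eq (p : ℕ) [Fact p.Prime] {y y' d : ℚ} (hd : d ≠ 0)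
    (h : d = y - y' ∨ d = y' - y) (hv : padicValRat p y ≤ padicValRat p y') :
    padicValRat p y ≤ padicValRat p d := by
  have key : y - y' ≠ 0 → padicValRat p y ≤ padicValRat p (y - y') := fun hne => by
    rw [sub_eq_add_neg] at hne ⊢
    exact padicValRat.le_padicValRat_add_of_le hne (by rwa [padicValRat.neg])
  rcases h with rfl | rfl
  · exact key hd
  · rw [← neg_sub, padicValRat.neg]
    exact key (by rwa [← neg_sub, neg_ne_zero] at hd)

/-- All factors of `(x)_k` but one of maximal valuation contribute at most `v(k!)`. -/
lemma val_ascPochhammer_le (p : ℕ) [Fact p.Prime] {x : ℚ} (hx : ∀ i : ℕ, x + i ≠ 0) {k : ℕ}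
    (hk : k ≠ 0) : ∃ i₀ < k, padicValRat p ((ascPochhammer ℚ k).eval x) ≤
      padicValRat p (x + (i₀ : ℕ)) + padicValRat p (k.factorial : ℚ) := by
  obtain ⟨i₀, hi₀, hmax⟩ := Finset.exists_max_image (Finset.range k)
    (fun i : ℕ => padicValRat p (x + i)) (Finset.nonempty_range_iff.2 hk)
  rw [Finset.mem_range] at hi₀
  refine ⟨i₀, hi₀, ?_⟩
  obtain ⟨r, rfl⟩ := Nat.exists_eq_add_of_lt hi₀
  rw [eval_ascPochhammer_eq_prod, padicValRat_finset_prod p _ _ fun i _ => hx i,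
    show i₀ + r + 1 = i₀ + 1 + r by ring, Finset.sum_range_add, Finset.sum_range_succ]
  have h1 : ∑ i ∈ Finset.range i₀, padicValRat p (x + (i : ℕ)) ≤
      padicValRat p (i₀.factorial : ℚ) := by
    rw [padicValRat_factorial, ← Finset.sum_range_reflect]
    refine Finset.sum_le_sum fun i hi => ?_
    rw [Finset.mem_range] at hi
    refine val_le_val_of_sub_eq p (y' := x + i₀) (by positivity) ?_
      (hmax _ (Finset.mem_range.2 (by omega)))
    right
    have h' : ((i₀ - 1 - i : ℕ) : ℚ) + 1 + i = i₀ := by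
      exact_mod_cast (by omega : i₀ - 1 - i + 1 + i = i₀)
    push_cast
    linarith
  have h2 : ∑ i ∈ Finset.range r, padicValRat p (x + ((i₀ + 1 + i : ℕ) : ℚ)) ≤
      padicValRat p (r.factorial : ℚ) := by
    rw [padicValRat_factorial]
    refine Finset.sum_le_sum fun i hi => ?_
    rw [Finset.mem_range] at hi
    refine val_le_val_of_sub_eq p (y' := x + i₀) (by positivity) ?_
      (hmax _ (Finset.mem_range.2 (by omega)))
    left
    push_cast
    ring
  have h3 : padicValRat p (i₀.factorial : ℚ) + padicValRat p (r.factorial : ℚ) ≤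
      padicValRat p ((i₀ + 1 + r).factorial : ℚ) := by
    rw [← padicValRat.mul (by positivity) (by positivity), ← Nat.cast_mul]
    exact padicValRat_natCast_le_of_dvd p (Nat.factorial_ne_zero _)
      ((Nat.factorial_mul_factorial_dvd_factorial_add i₀ r).trans
        (Nat.factorial_dvd_factorial (by omega)))
  linarith

/-- With `x = a / b` in lowest terms, `p ^ v(x + i)` divides the nonzero integer `a + i b`, hence is
at most `|a| + i b`. A negative valuation is replaced by `0`. -/
lemma pow_toNat_val_add_le (p : ℕ) [Fact p.Prime] {x : ℚ} (hx : ∀ i : ℕ, x + i ≠ 0) (i : ℕ) :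
    p ^ (padicValRat p (x + i)).toNat ≤ x.num.natAbs + i * x.den := by
  have hb : (x.den : ℚ) ≠ 0 := by exact_mod_cast x.den_nz
  have hmul : (x + i) * x.den = ((x.num + i * x.den : ℤ) : ℚ) := by
    push_cast
    rw [add_mul, Rat.mul_den_eq_num]
  have hz : (x.num + i * x.den : ℤ) ≠ 0 := by
    intro h
    rw [h, Int.cast_zero] at hmul
    exact mul_ne_zero (hx i) hb hmul
  have hv := congrArg (padicValRat p) hmul
  rw [padicValRat.mul (hx i) hb, padicValRat.of_int, padicValRat.of_nat] at hv
  have hle : (padicValRat p (x + i)).toNat ≤ padicValInt p (x.num + i * x.den) := by omega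
  calc p ^ (padicValRat p (x + i)).toNat ≤ p ^ padicValInt p (x.num + i * x.den) :=
        Nat.pow_le_pow_right (Fact.out : p.Prime).pos hle
    _ ≤ (x.num + i * x.den : ℤ).natAbs :=
        Nat.le_of_dvd (Int.natAbs_pos.2 hz) pow_padicValNat_dvd
    _ ≤ x.num.natAbs + i * x.den := by
        refine (Int.natAbs_add_le _ _).trans ?_
        rw [Int.natAbs_mul, Int.natAbs_natCast, Int.natAbs_natCast]

lemma sq_le_four_mul_two_pow (v : ℕ) : v ^ 2 ≤ 4 * 2 ^ v := by
  induction v with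
  | zero => simp
  | succ v ih =>
    rcases Nat.lt_or_ge v 3 with h | h
    · interval_cases v <;> norm_num
    · rw [pow_succ 2 v]
      nlinarith

/-- Logarithmic growth is slower than linear growth of any slope. -/
lemma mul_le_div_add_of_pow_le {p : ℕ} (hp : 2 ≤ p) {A B v k : ℕ} (N : ℕ) (hB : 0 < B)
    (h : p ^ v ≤ A + k * B) : N * v ≤ k / p + (1 + A + 4 * N ^ 2 * p ^ 2 * B) := by
  have h2 : v ^ 2 ≤ 4 * (A + k * B) :=
    (sq_le_four_mul_two_pow v).trans (Nat.mul_le_mul_left 4 ((Nat.pow_le_pow_left hp v).trans h))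
  have hkey : N * p * v ≤ k + (A + 4 * N ^ 2 * p ^ 2 * B) := by
    rcases le_total v (4 * N * p * B) with hv | hv
    · calc N * p * v ≤ N * p * (4 * N * p * B) := Nat.mul_le_mul_left _ hv
        _ = 4 * N ^ 2 * p ^ 2 * B := by ring
        _ ≤ _ := by omega
    · have h3 : (4 * B) * (N * p * v) ≤ (4 * B) * (k + A) :=
        calc (4 * B) * (N * p * v) = (4 * N * p * B) * v := by ring
          _ ≤ v * v := Nat.mul_le_mul_right _ hv
          _ = v ^ 2 := by ring
          _ ≤ 4 * (A + k * B) := h2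
          _ ≤ (4 * B) * (k + A) := by nlinarith
      have := Nat.le_of_mul_le_mul_left h3 (by omega)
      omega
  have hdiv : k < p * (k / p) + p := by
    have := Nat.div_add_mod k p
    have := Nat.mod_lt k (show 0 < p by omega)
    omega
  have hD : A + 4 * N ^ 2 * p ^ 2 * B ≤ p * (A + 4 * N ^ 2 * p ^ 2 * B) :=
    Nat.le_mul_of_pos_left _ (by omega)
  refine le_of_mul_le_mul_left (a := p) ?_ (by omega)
  calc p * (N * v) = N * p * v := by ring
    _ ≤ p * (k / p) + p + p * (A + 4 * N ^ 2 * p ^ 2 * B) := by omega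
    _ = _ := by ring

/-- Even `N` times the excess of `v((x)_k)` over `v(k!)` is at most `v(k!) + O(1)`. -/
lemma exists_mul_val_excess_le (p : ℕ) [Fact p.Prime] {x : ℚ} (hx : ∀ i : ℕ, x + i ≠ 0) (N : ℕ) :
    ∃ C : ℤ, ∀ k : ℕ, N * (padicValRat p ((ascPochhammer ℚ k).eval x) -
      padicValRat p (k.factorial : ℚ)) ≤ padicValRat p (k.factorial : ℚ) + C := by
  refine ⟨((1 + x.num.natAbs + 4 * N ^ 2 * p ^ 2 * x.den : ℕ) : ℤ), fun k => ?_⟩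
  rcases eq_or_ne k 0 with rfl | hk
  · simp only [ascPochhammer_zero, Polynomial.eval_one, Nat.factorial_zero, Nat.cast_one,
      padicValRat.one, sub_self, mul_zero, zero_add]
    positivity
  obtain ⟨i, hi, hle⟩ := val_ascPochhammer_le p hx hk
  have h1 : p ^ (padicValRat p (x + i)).toNat ≤ x.num.natAbs + k * x.den :=
    (pow_toNat_val_add_le p hx i).trans
      (Nat.add_le_add_left (Nat.mul_le_mul_right _ hi.le) _)
  have h2 : ((N * (padicValRat p (x + i)).toNat : ℕ) : ℤ) ≤ _ :=
    Int.ofNat_le.2 (mul_le_div_add_of_pow_le (Fact.out : p.Prime).two_le N x.den_pos h1)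
  have h3 := div_le_padicValRat_factorial p k
  calc (N : ℤ) * (padicValRat p ((ascPochhammer ℚ k).eval x) - padicValRat p (k.factorial : ℚ))
      ≤ N * ((padicValRat p (x + i)).toNat : ℤ) :=
        mul_le_mul_of_nonneg_left (by have := Int.self_le_toNat (padicValRat p (x + i)); linarith)
          (by positivity)
    _ = ((N * (padicValRat p (x + i)).toNat : ℕ) : ℤ) := by push_cast; rfl
    _ ≤ _ := h2
    _ ≤ _ := by rw [Nat.cast_add]; linarith

theorem stmt6 (m n : ℕ) (hmn : n + 1 < m) (α : Fin m → ℚ) (β : Fin n → ℚ)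
    (hα : ∀ i, ¬ ∃ z : ℤ, z ≤ 0 ∧ α i = (z : ℚ))
    (hβ : ∀ j, ¬ ∃ z : ℤ, z ≤ 0 ∧ β j = (z : ℚ))
    (p : ℕ) [Fact p.Prime]
    (hαp : ∀ i, ‖((α i : ℚ) : ℚ_[p])‖ ≤ 1)
    (hβp : ∀ j, ‖((β j : ℚ) : ℚ_[p])‖ ≤ 1) :
    ∃ C : ℤ, ∀ k : ℕ, C ≤ padicValRat p (hgCoeff m n α β k) := by
  have hα' : ∀ i (l : ℕ), α i + l ≠ 0 := fun i => add_natCast_ne_zero_of_not_nonpos (hα i)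
  have hβ' : ∀ j (l : ℕ), β j + l ≠ 0 := fun j => add_natCast_ne_zero_of_not_nonpos (hβ j)
  -- The slope `1 / (n + 1)` keeps the total excess of the `n` denominators below `v(k!) + C`,
  -- and avoids a separate treatment of `n = 0`.
  choose C hC using fun j => exists_mul_val_excess_le p (hβ' j) (n + 1)
  refine ⟨-|∑ j, C j|, fun k => ?_⟩
  set F := padicValRat p (k.factorial : ℚ) with hF
  have hF0 : 0 ≤ F := by rw [hF, padicValRat.of_nat]; positivity
  have hnum := fun i => eval_ascPochhammer_ne_zero (hα' i) k
  have hden := fun j => eval_ascPochhammer_ne_zero (hβ' j) k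
  have hden' := Finset.prod_ne_zero_iff.2 fun j (_ : j ∈ Finset.univ) => hden j
  have hfact : (k.factorial : ℚ) ≠ 0 := by positivity
  rw [hgCoeff, padicValRat.div (Finset.prod_ne_zero_iff.2 fun i _ => hnum i)
    (mul_ne_zero hden' hfact), padicValRat.mul hden' hfact,
    padicValRat_finset_prod p _ _ fun i _ => hnum i,
    padicValRat_finset_prod p _ _ fun j _ => hden j, ← hF]
  have hA : (m : ℤ) * F ≤ ∑ i, padicValRat p ((ascPochhammer ℚ k).eval (α i)) := by
    have := Finset.sum_le_sum fun i (_ : i ∈ Finset.univ) =>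
      le_val_ascPochhammer p (hα' i) (hαp i) k
    simpa [hF] using this
  have hB : ((n : ℤ) + 1) * (∑ j, padicValRat p ((ascPochhammer ℚ k).eval (β j)) - n * F) ≤
      n * F + ∑ j, C j := by
    have := Finset.sum_le_sum fun j (_ : j ∈ Finset.univ) => hC j k
    rw [← Finset.mul_sum, Finset.sum_sub_distrib, Finset.sum_add_distrib] at this
    simpa [hF] using this
  set S := ∑ j, padicValRat p ((ascPochhammer ℚ k).eval (β j))
  have hS : S - n * F ≤ F + |∑ j, C j| := by
    refine le_of_mul_le_mul_left (hB.trans ?_) (show (0 : ℤ) < n + 1 by positivity)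
    have h1 := le_abs_self (∑ j, C j)
    have h2 := mul_nonneg (Int.natCast_nonneg n) (abs_nonneg (∑ j, C j))
    linarith
  have hm : ((n : ℤ) + 2) * F ≤ m * F := mul_le_mul_of_nonneg_right (by omega) hF0
  linarith
end

section
/- Let a, c ∈ ℚ with 2a ∉ ℤ and c not a nonpositive integer, let b ∈ ℚ be nonzero, and let D be a nonsquare integer with K = ℚ(√D). Let M be the least common multiple of the denominators of a and c and the discriminant of K. Suppose u ∈ (ℤ/Mℤ)^× satisfies {−u^j c} ≤ (1/2)·{−2u^j a} for every integer j ≥ 0. Then for all but finitely many primes p ≡ u (mod M) such that D is a square in ℚ_p, the series F_D(a,b,c,z) is p-adically bounded. -/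
/-!
For a prime `p` such that `D = s²` in `ℚ_[p]`, put `α = a + b s` and `β = a - b s`, so that
`A_n = (α)_n (β)_n / ((c)_n n!)`. For all but finitely many such `p ≡ u (mod M)` the coefficients
are in fact `p`-integral.

Let `α_k`, `β_k`, `c_k ∈ [0, p ^ k)` be the residues of `-α`, `-β`, `-c` modulo `p ^ k`. Counting the
factors divisible by `p ^ k` (`valuation_shift_prod`) shows that `A_n` is `p`-integral as soon as
`min α_k β_k ≤ c_k` for every `k ≥ 1` (`valuation_le_of_min_negRes_le`).

To prove this inequality choose `j` with `u ^ j p ^ k ≡ 1 (mod M)`. For large `p`,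
`C = p ^ k {-u ^ j c} + c` and `A = p ^ k {-2 u ^ j a} + 2a` are integers congruent to `c` and `2a`
modulo `p ^ k`, with `0 < C ≤ p ^ k` and `A ≤ p ^ k` (`exists_fract_lift`, `dvd_sub_of_fract`). Hence
`c_k = p ^ k - C` and `α_k + β_k ≤ 2 p ^ k - A`, and the hypothesis on fractional parts gives
`2C - A ≤ 2(c - a)`. If both `α_k` and `β_k` exceeded `c_k`, then `|α_k - β_k|` would be bounded
independently of `p` and `k` (`min_negRes_le`). But `α_k - β_k ≡ -2bs (mod p)`, so `p` would divide
the numerator of `(α_k - β_k)² - 4b²D`, which is nonzero because `D` is not a square; this excludes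
all large `p` (`not_dvd_add_sub`).
-/

open scoped BigOperators

/-- The `n`-th coefficient of `F_D(a,b,c,z) = ₂F₁(a+b√D, a−b√D; c; z)`. -/
noncomputable def FDcoeff (a b c D : ℚ) (n : ℕ) : ℚ :=
  (∏ j ∈ Finset.range n, ((-(j : ℚ)) ^ 2 - 2 * a * (-(j : ℚ)) + a ^ 2 - b ^ 2 * D)) /
    ((ascPochhammer ℚ n).eval c * (n.factorial : ℚ))

/-! ### Integers prescribed by fractional parts -/

/-- For `N v ≡ 1` modulo the denominator of `c`, the number `N {-vc} + c` is an integer, and it lies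
in `(0, N]` once `N` is large and `c` is not a nonpositive integer. -/
lemma exists_fract_lift (c : ℚ) (N : ℕ) (v : ℤ) (h : (c.den : ℤ) ∣ 1 - N * v)
    (hN : |c| * c.den < N) :
    ∃ C : ℤ, (C : ℚ) = N * Int.fract (-(v : ℚ) * c) + c ∧ C ≤ N ∧
      ((¬ ∃ z : ℤ, z ≤ 0 ∧ c = (z : ℚ)) → 0 < C) := by
  obtain ⟨w, hw⟩ := h
  have hw' : (1 : ℚ) - N * v = c.den * w := by exact_mod_cast hw
  have hd : (0 : ℚ) < c.den := by exact_mod_cast c.den_pos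
  have hcd : c * c.den = c.num := Rat.mul_den_eq_num c
  have hC : ((c.num * w - N * ⌊-(v : ℚ) * c⌋ : ℤ) : ℚ) = N * Int.fract (-(v : ℚ) * c) + c := by
    have h1 : Int.fract (-(v : ℚ) * c) = -(v : ℚ) * c - ⌊-(v : ℚ) * c⌋ := rfl
    rw [h1]; push_cast
    linear_combination (-w : ℚ) * hcd - c * hw'
  refine ⟨_, hC, ?_⟩
  set C : ℤ := c.num * w - N * ⌊-(v : ℚ) * c⌋
  set f := Int.fract (-(v : ℚ) * c) with hf
  have hd1 : (1 : ℚ) ≤ c.den := by exact_mod_cast c.den_pos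
  have hcN : |c| < N := by nlinarith [abs_nonneg c]
  have habs := abs_le.mp (le_refl |c|)
  have hf0 : 0 ≤ f := Int.fract_nonneg _
  have hf1 : f < 1 := Int.fract_lt_one _
  rcases hf0.eq_or_lt with h0 | h0
  · rw [← h0, mul_zero, zero_add] at hC
    constructor
    · have : (C : ℚ) ≤ N := by linarith
      exact_mod_cast this
    · intro hc
      by_contra! hneg
      exact hc ⟨C, hneg, hC.symm⟩
  · -- a noninteger `f` lies at distance at least `1 / c.den` from the integers
    have hm : f * c.den = ((-v * c.num - ⌊-(v : ℚ) * c⌋ * c.den : ℤ) : ℚ) := by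
      have h1 : f = -(v : ℚ) * c - ⌊-(v : ℚ) * c⌋ := rfl
      rw [h1]; push_cast
      linear_combination (-v : ℚ) * hcd
    set m : ℤ := -v * c.num - ⌊-(v : ℚ) * c⌋ * c.den
    have hm1 : 1 ≤ m := by
      have : (0 : ℚ) < m := by rw [← hm]; positivity
      have : 0 < m := by exact_mod_cast this
      omega
    have hm2 : m + 1 ≤ c.den := by
      have : (m : ℚ) < c.den := by rw [← hm]; nlinarith
      have : m < c.den := by exact_mod_cast this
      omega
    have hm1' : (1 : ℚ) ≤ f * c.den := by rw [hm]; exact_mod_cast hm1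
    have hm2' : f * c.den + 1 ≤ c.den := by rw [hm]; exact_mod_cast hm2
    have hN0 : (0 : ℚ) ≤ N := by positivity
    have e1 : |c| < N * f := by
      refine lt_of_mul_lt_mul_right (a := (c.den : ℚ)) ?_ hd.le
      nlinarith
    have e2 : |c| < N * (1 - f) := by
      refine lt_of_mul_lt_mul_right (a := (c.den : ℚ)) ?_ hd.le
      nlinarith
    constructor
    · have : (C : ℚ) ≤ N := by rw [hC]; linarith
      exact_mod_cast this
    · intro _
      have : (0 : ℚ) < C := by rw [hC]; linarith
      exact_mod_cast this

/-! ### Valuations of rising factorials -/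

section PadicCounting

variable {p : ℕ} [hp : Fact p.Prime]

/-- The residue of `-x` modulo `p ^ k`, as a natural number in `[0, p ^ k)`. -/
noncomputable def negRes (x : ℤ_[p]) (k : ℕ) : ℕ := (-x).appr k

lemma negRes_lt (x : ℤ_[p]) (k : ℕ) : negRes x k < p ^ k := PadicInt.appr_lt _ _

lemma dvd_add_negRes (x : ℤ_[p]) (k : ℕ) : (p : ℤ_[p]) ^ k ∣ x + negRes x k := by
  have h := PadicInt.appr_spec k (-x)
  rw [Ideal.mem_span_singleton] at h
  have := (dvd_neg).mpr h
  rwa [neg_sub, sub_neg_eq_add, add_comm] at this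

lemma dvd_add_iff_modEq (x : ℤ_[p]) (k j : ℕ) :
    (p : ℤ_[p]) ^ k ∣ x + j ↔ j ≡ negRes x k [MOD p ^ k] := by
  rw [Nat.modEq_iff_dvd]
  push_cast
  rw [← PadicInt.pow_p_dvd_int_iff]
  have h := dvd_add_negRes x k
  push_cast
  constructor
  · intro h'
    simpa using dvd_sub h h'
  · intro h'
    convert dvd_sub h h' using 1; ring

open scoped Classical in
lemma valuation_eq_sum (x : ℤ_[p]) (hx : x ≠ 0) (K : ℕ) (hK : x.valuation ≤ K) :
    x.valuation = ∑ k ∈ Finset.Icc 1 K, if (p : ℤ_[p]) ^ k ∣ x then 1 else 0 := by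
  rw [← Finset.card_filter]
  have : (Finset.Icc 1 K).filter (fun k => (p : ℤ_[p]) ^ k ∣ x) = Finset.Icc 1 x.valuation := by
    ext k
    rw [Finset.mem_filter, ← Ideal.mem_span_singleton, PadicInt.mem_span_pow_iff_le_valuation x hx]
    simp only [Finset.mem_Icc]
    omega
  rw [this]; simp

lemma shift_prod_ne_zero (x : ℤ_[p]) (n : ℕ) (hx : ∀ j < n, x + (j : ℤ_[p]) ≠ 0) :
    ∏ j ∈ Finset.range n, (x + (j : ℤ_[p])) ≠ 0 :=
  Finset.prod_ne_zero_iff.mpr fun j hj => hx j (Finset.mem_range.mp hj)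

/-- Legendre-type formula for the rising factorial `(x)_n`: the factors divisible by `p ^ k` are
those with `j ≡ -x`, so there are `⌊n / p ^ k⌋` of them, plus one more exactly when the residue of
`-x` is less than that of `n`. -/
lemma valuation_shift_prod (x : ℤ_[p]) (n K : ℕ) (hx : ∀ j < n, x + (j : ℤ_[p]) ≠ 0)
    (hK : ∀ j < n, (x + (j : ℤ_[p])).valuation ≤ K) :
    (∏ j ∈ Finset.range n, (x + (j : ℤ_[p]))).valuation =
      ∑ k ∈ Finset.Icc 1 K, (n / p ^ k + if negRes x k < n % p ^ k then 1 else 0) := by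
  classical
  have h1 : ∀ m ≤ n, (∏ j ∈ Finset.range m, (x + (j : ℤ_[p]))).valuation =
      ∑ j ∈ Finset.range m, (x + (j : ℤ_[p])).valuation := by
    intro m
    induction m with
    | zero => intro _; simp
    | succ m ih =>
      intro hm
      rw [Finset.prod_range_succ, Finset.sum_range_succ, PadicInt.valuation_mul, ih (by omega)]
      · exact shift_prod_ne_zero x m fun j hj => hx j (by omega)
      · exact hx m (by omega)
  rw [h1 n le_rfl]
  have h2 : ∀ j ∈ Finset.range n, (x + (j : ℤ_[p])).valuation =
      ∑ k ∈ Finset.Icc 1 K, if (p : ℤ_[p]) ^ k ∣ x + j then 1 else 0 := fun j hj =>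
    valuation_eq_sum _ (hx j (Finset.mem_range.mp hj)) K (hK j (Finset.mem_range.mp hj))
  rw [Finset.sum_congr rfl h2, Finset.sum_comm]
  refine Finset.sum_congr rfl fun k _ => ?_
  simp only [dvd_add_iff_modEq]
  rw [← Finset.card_filter, ← Nat.count_eq_card_filter_range,
    Nat.count_modEq_card n (pow_pos hp.out.pos k), Nat.mod_eq_of_lt (negRes_lt x k)]

/-- Termwise comparison in `valuation_shift_prod`; the factor `n! = (1)_n` contributes only
`⌊n / p ^ k⌋`, since `-1` has the largest possible residue. -/
lemma valuation_le_of_min_negRes_le (α β γ : ℤ_[p]) (n : ℕ)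
    (hα : ∀ j < n, α + (j : ℤ_[p]) ≠ 0) (hβ : ∀ j < n, β + (j : ℤ_[p]) ≠ 0)
    (hγ : ∀ j < n, γ + (j : ℤ_[p]) ≠ 0)
    (h : ∀ k, 1 ≤ k → min (negRes α k) (negRes β k) ≤ negRes γ k) :
    ((∏ j ∈ Finset.range n, (γ + (j : ℤ_[p]))) *
        ∏ j ∈ Finset.range n, (1 + (j : ℤ_[p]))).valuation ≤
      ((∏ j ∈ Finset.range n, (α + (j : ℤ_[p]))) *
        ∏ j ∈ Finset.range n, (β + (j : ℤ_[p]))).valuation := by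
  have h1 : ∀ j < n, (1 : ℤ_[p]) + (j : ℤ_[p]) ≠ 0 := by
    intro j _
    have : ((1 + j : ℕ) : ℤ_[p]) ≠ 0 := Nat.cast_ne_zero.mpr (by omega)
    push_cast at this; exact this
  rw [PadicInt.valuation_mul (shift_prod_ne_zero _ _ hγ) (shift_prod_ne_zero _ _ h1),
    PadicInt.valuation_mul (shift_prod_ne_zero _ _ hα) (shift_prod_ne_zero _ _ hβ)]
  -- one truncation level `K` exceeding all valuations involved
  let F : ℤ_[p] → ℕ := fun x => ∑ j ∈ Finset.range n, (x + (j : ℤ_[p])).valuation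
  have hF : ∀ x : ℤ_[p], ∀ j < n, (x + (j : ℤ_[p])).valuation ≤ F x := fun x j hj =>
    Finset.single_le_sum (f := fun j : ℕ => (x + (j : ℤ_[p])).valuation)
      (fun _ _ => Nat.zero_le _) (Finset.mem_range.mpr hj)
  let K := F α + F β + F γ + F 1
  rw [valuation_shift_prod α n K hα fun j hj => (hF α j hj).trans (by simp only [K]; omega),
    valuation_shift_prod β n K hβ fun j hj => (hF β j hj).trans (by simp only [K]; omega),
    valuation_shift_prod γ n K hγ fun j hj => (hF γ j hj).trans (by simp only [K]; omega),
    valuation_shift_prod 1 n K h1 fun j hj => (hF 1 j hj).trans (by simp only [K]; omega),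
    ← Finset.sum_add_distrib, ← Finset.sum_add_distrib]
  refine Finset.sum_le_sum fun k hk => ?_
  have hk1 := h k (Finset.mem_Icc.mp hk).1
  have hpk : 0 < p ^ k := pow_pos hp.out.pos k
  have hres : ¬ negRes (1 : ℤ_[p]) k < n % p ^ k := by
    have hd := dvd_add_negRes (1 : ℤ_[p]) k
    have : (p : ℤ) ^ k ∣ 1 + negRes (1 : ℤ_[p]) k := by
      rw [← PadicInt.pow_p_dvd_int_iff]; push_cast; exact hd
    have : p ^ k ∣ 1 + negRes (1 : ℤ_[p]) k := by exact_mod_cast this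
    have := Nat.le_of_dvd (by omega) this
    have := Nat.mod_lt n hpk
    omega
  rw [if_neg hres]
  rcases min_le_iff.mp hk1 with h' | h' <;> split_ifs <;> omega

/-- If `A ≡ α + β` and `C ≡ γ` modulo `p ^ k`, the residues of `-α`, `-β` add up to at most
`2 p ^ k - A`, while that of `-γ` is `p ^ k - C`. Were both of the former larger than the latter,
they would differ by at most `T`, which `hsep` forbids. -/
lemma min_negRes_le (α β γ : ℤ_[p]) (k : ℕ) (hk : 1 ≤ k) (A C T : ℤ)
    (hA : (p : ℤ_[p]) ^ k ∣ (A : ℤ_[p]) - (α + β)) (hC : (p : ℤ_[p]) ^ k ∣ (C : ℤ_[p]) - γ)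
    (hA1 : A ≤ p ^ k) (hC0 : 0 < C) (hC1 : C ≤ p ^ k) (hAC : 2 * C ≤ A + T)
    (hsep : ∀ m : ℤ, |m| ≤ T → ¬ (p : ℤ_[p]) ∣ (m : ℤ_[p]) + (α - β)) :
    min (negRes α k) (negRes β k) ≤ negRes γ k := by
  have hα := dvd_add_negRes α k
  have hβ := dvd_add_negRes β k
  have hγ := dvd_add_negRes γ k
  have lα := negRes_lt α k
  have lβ := negRes_lt β k
  have lγ := negRes_lt γ k
  generalize negRes α k = r at *
  generalize negRes β k = r' at *
  generalize negRes γ k = t at *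
  have e1 : (p : ℤ) ^ k ∣ r + r' + A := by
    rw [← PadicInt.pow_p_dvd_int_iff]
    have := dvd_add (dvd_add hα hβ) hA
    push_cast
    convert this using 1; ring
  have e2 : (p : ℤ) ^ k ∣ t + C := by
    rw [← PadicInt.pow_p_dvd_int_iff]
    have := dvd_add hγ hC
    push_cast
    convert this using 1; ring
  have hsep' := hsep (r - r')
  have e3 : (p : ℤ_[p]) ∣ ((r - r' : ℤ) : ℤ_[p]) + (α - β) := by
    have h1 := dvd_sub hα hβ
    have h2 := (dvd_pow_self (p : ℤ_[p]) (by omega : k ≠ 0)).trans h1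
    push_cast
    convert h2 using 1; ring
  have lα' : (r : ℤ) < p ^ k := by exact_mod_cast lα
  have lβ' : (r' : ℤ) < p ^ k := by exact_mod_cast lβ
  have lγ' : (t : ℤ) < p ^ k := by exact_mod_cast lγ
  generalize (p : ℤ) ^ k = N at *
  have e1' : (r : ℤ) + r' + A ≤ 2 * N := by
    obtain ⟨m, hm⟩ := e1
    have : m ≤ 2 := by
      by_contra! h3
      have : 3 ≤ m := h3
      nlinarith
    nlinarith
  have e2' : (t : ℤ) + C = N := by
    obtain ⟨m, hm⟩ := e2
    have h1 : m < 2 := by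
      by_contra! h3
      nlinarith
    have h2 : 0 < m := by
      by_contra! h3
      nlinarith
    have : m = 1 := by omega
    rw [hm, this, mul_one]
  by_contra! hlt
  rw [lt_min_iff] at hlt
  refine hsep' ?_ e3
  rw [abs_le]
  constructor <;> omega

lemma coe_prod_range (f : ℕ → ℤ_[p]) (n : ℕ) :
    ((∏ j ∈ Finset.range n, f j : ℤ_[p]) : ℚ_[p]) = ∏ j ∈ Finset.range n, (f j : ℚ_[p]) :=
  map_prod PadicInt.Coe.ringHom f _

lemma exists_padicInt_of_rat (q : ℚ) (h : q.den < p) : ∃ x : ℤ_[p], (x : ℚ_[p]) = q :=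
  ⟨⟨q, Padic.norm_rat_le_one fun hd => absurd (Nat.le_of_dvd q.den_pos hd) (by omega)⟩, rfl⟩

/-- The integer `N {-vc} + c` of `exists_fract_lift` is congruent to `c` modulo `N`. -/
lemma dvd_sub_of_fract (c : ℚ) (γ : ℤ_[p]) (hγ : (γ : ℚ_[p]) = c) (k : ℕ) (v C : ℤ)
    (hC : (C : ℚ) = (p ^ k : ℕ) * Int.fract (-(v : ℚ) * c) + c) :
    (p : ℤ_[p]) ^ k ∣ (C : ℤ_[p]) - γ := by
  refine ⟨-(v : ℤ_[p]) * γ - (⌊-(v : ℚ) * c⌋ : ℤ), ?_⟩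
  have h1 : (C : ℚ) - c = p ^ k * (-(v : ℚ) * c - (⌊-(v : ℚ) * c⌋ : ℤ)) := by
    rw [hC, ← Int.self_sub_floor]; push_cast; ring
  have h2 := congrArg (fun q : ℚ => (q : ℚ_[p])) h1
  apply Subtype.coe_injective
  push_cast at h2 ⊢
  rw [hγ]
  exact h2

/-- Because `D` is not a square, `α - β = 2b√D` stays away from the small integers modulo `p`. -/
lemma not_dvd_add_sub (b : ℚ) (hb : b ≠ 0) (D : ℤ) (hD : ¬ IsSquare D) (T : ℤ)
    (hT : (b.den : ℤ) ^ 2 * T ^ 2 + 4 * b.num ^ 2 * |D| < p)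
    (x s : ℤ_[p]) (hx : (x : ℚ_[p]) = b) (hs : s ^ 2 = (D : ℤ_[p])) (m : ℤ) (hm : |m| ≤ T) :
    ¬ (p : ℤ_[p]) ∣ (m : ℤ_[p]) + 2 * x * s := by
  intro h
  have hx' : x * (b.den : ℤ_[p]) = (b.num : ℤ_[p]) := by
    apply Subtype.coe_injective
    push_cast
    rw [hx]
    exact_mod_cast congrArg (fun q : ℚ => (q : ℚ_[p])) (Rat.mul_den_eq_num b)
  set E : ℤ := (m * b.den) ^ 2 - D * (2 * b.num) ^ 2 with hE
  have h1 : (p : ℤ) ∣ E := by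
    have : (p : ℤ_[p]) ^ 1 ∣ (E : ℤ_[p]) := by
      rw [pow_one]
      have h2 : (E : ℤ_[p]) =
          ((m : ℤ_[p]) + 2 * x * s) * ((m - 2 * x * s) * (b.den : ℤ_[p]) ^ 2) := by
        rw [hE]; push_cast
        rw [← hx', ← hs]; ring
      rw [h2]
      exact h.mul_right _
    rw [PadicInt.pow_p_dvd_int_iff, pow_one] at this
    exact this
  have h2 : |E| < p := by
    have hm2 : m ^ 2 ≤ T ^ 2 := by
      rw [← sq_abs m]; exact pow_le_pow_left₀ (abs_nonneg m) hm 2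
    have hb2 : 0 ≤ (b.den : ℤ) ^ 2 := sq_nonneg _
    calc |E| ≤ |(m * b.den) ^ 2| + |D * (2 * b.num) ^ 2| := abs_sub _ _
      _ = b.den ^ 2 * m ^ 2 + 4 * b.num ^ 2 * |D| := by
        rw [abs_mul, abs_of_nonneg (sq_nonneg (m * (b.den : ℤ))),
          abs_of_nonneg (sq_nonneg (2 * b.num))]; ring
      _ < p := by nlinarith
  have h3 : E = 0 := Int.eq_zero_of_abs_lt_dvd h1 h2
  have h4 : (m * b.den) ^ 2 = D * (2 * b.num) ^ 2 := by linarith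
  have h5 : 2 * b.num ∣ m * b.den := by
    rw [← Int.pow_dvd_pow_iff (n := 2) two_ne_zero, h4]; exact dvd_mul_left _ _
  obtain ⟨t, ht⟩ := h5
  have hbn : 2 * b.num ≠ 0 := by simpa using hb
  refine hD ⟨t, ?_⟩
  rw [ht] at h4
  refine mul_right_cancel₀ (pow_ne_zero 2 hbn) ?_
  rw [← h4]; ring

end PadicCounting

/-! ### Boundedness of the coefficients -/

lemma ascPochhammer_eval_eq_prod_add (c : ℚ) (n : ℕ) :
    (ascPochhammer ℚ n).eval c = ∏ j ∈ Finset.range n, (c + j) := by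
  induction n with
  | zero => simp
  | succ n ih => rw [ascPochhammer_succ_eval, ih, Finset.prod_range_succ]

lemma quadratic_ne_zero (a b : ℚ) (hb : b ≠ 0) (D : ℤ) (hD : ¬ IsSquare D) (x : ℚ) :
    x ^ 2 - 2 * a * x + a ^ 2 - b ^ 2 * D ≠ 0 := by
  intro h
  have h1 : (D : ℚ) = ((x - a) / b) * ((x - a) / b) := by
    field_simp; linarith
  exact hD (Rat.isSquare_intCast_iff.mp ⟨_, h1⟩)

lemma exists_pow_inverse (M u p k : ℕ) (hM : 0 < M) (hu : u.Coprime M) (h : p ≡ u [MOD M]) :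
    ∃ j : ℕ, (M : ℤ) ∣ 1 - (p ^ k : ℕ) * ((u ^ j : ℕ) : ℤ) := by
  refine ⟨k * (M.totient - 1), ?_⟩
  have h1 : p ^ k * u ^ (k * (M.totient - 1)) ≡ 1 [MOD M] := by
    have e : u ^ k * u ^ (k * (M.totient - 1)) = (u ^ M.totient) ^ k := by
      have := Nat.totient_pos.mpr hM
      obtain ⟨t, ht⟩ : ∃ t, M.totient = t + 1 := ⟨M.totient - 1, by omega⟩
      rw [ht, ← pow_add, ← pow_mul]; congr 1; simp; ring
    calc p ^ k * u ^ (k * (M.totient - 1)) ≡ u ^ k * u ^ (k * (M.totient - 1)) [MOD M] :=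
          (h.pow k).mul_right _
      _ = (u ^ M.totient) ^ k := e
      _ ≡ 1 ^ k [MOD M] := (Nat.ModEq.pow_totient hu).pow k
      _ = 1 := one_pow k
  have := Nat.modEq_iff_dvd.mp h1
  push_cast at this ⊢
  exact this

theorem stmt13 (a b c : ℚ) (ha : (2 * a).den ≠ 1) (hb : b ≠ 0)
    (hc : ¬ ∃ z : ℤ, z ≤ 0 ∧ c = (z : ℚ))
    (D : ℤ) (hD : ¬ IsSquare D)
    -- `d` is the squarefree part of `D`, so that the discriminant of `K = ℚ(√D)` is
    -- `Δ = d` if `d ≡ 1 (mod 4)` and `Δ = 4d` otherwise.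
    (d e : ℤ) (hd : Squarefree d) (hde : D = d * e ^ 2)
    (Δ : ℤ) (hΔ : Δ = if d % 4 = 1 then d else 4 * d)
    (M : ℕ) (hM : M = Nat.lcm (Nat.lcm a.den c.den) Δ.natAbs)
    (u : ℕ) (hu : Nat.Coprime u M)
    (hcond : ∀ j : ℕ, Int.fract (-(u : ℚ) ^ j * c) ≤ (1 / 2) * Int.fract (-2 * (u : ℚ) ^ j * a)) :
    ∃ S : Finset ℕ, ∀ (p : ℕ) [Fact p.Prime], p ∉ S → p ≡ u [MOD M] →
      (∃ s : ℚ_[p], s ^ 2 = (D : ℚ_[p])) →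
      ∃ C : ℤ, ∀ n : ℕ, C ≤ padicValRat p (FDcoeff a b c (D : ℚ) n) := by
  have hd0 : d ≠ 0 := hd.ne_zero
  have hΔ0 : Δ ≠ 0 := by rw [hΔ]; split_ifs <;> omega
  have hM0 : 0 < M := by
    rw [hM]
    exact Nat.lcm_pos (Nat.lcm_pos a.den_pos c.den_pos) (Int.natAbs_pos.mpr hΔ0)
  have hcM : c.den ∣ M := hM ▸ (Nat.dvd_lcm_right _ _).trans (Nat.dvd_lcm_left _ _)
  have haM : (2 * a).den ∣ M := by
    have h1 : (2 * a).den ∣ a.den := by simpa using Rat.mul_den_dvd 2 a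
    exact h1.trans (hM ▸ (Nat.dvd_lcm_left _ _).trans (Nat.dvd_lcm_left _ _))
  set T : ℤ := ⌈|2 * c - 2 * a|⌉ with hTdef
  set B : ℕ := a.den + b.den + c.den + ⌈|c| * c.den⌉₊ + ⌈|2 * a| * (2 * a).den⌉₊ +
    ((b.den : ℤ) ^ 2 * T ^ 2 + 4 * b.num ^ 2 * |D|).natAbs + 1 with hB
  refine ⟨Finset.range B, fun p hp hpS hpu ⟨s, hs⟩ => ⟨0, fun n => ?_⟩⟩
  have hpB : B ≤ p := by simpa using hpS
  have hsn : ‖s‖ ≤ 1 := by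
    have h1 : ‖s‖ ^ 2 ≤ 1 := by
      rw [← norm_pow, hs]; exact Padic.norm_int_le_one D
    exact (sq_le_one_iff₀ (norm_nonneg s)).mp h1
  obtain ⟨σ, hσ⟩ : ∃ σ : ℤ_[p], (σ : ℚ_[p]) = s := ⟨⟨s, hsn⟩, rfl⟩
  have hσ2 : σ ^ 2 = (D : ℤ_[p]) := by
    apply Subtype.coe_injective
    push_cast
    rw [hσ, hs]
  obtain ⟨x, hx⟩ := exists_padicInt_of_rat (p := p) a (by omega)
  obtain ⟨y, hy⟩ := exists_padicInt_of_rat (p := p) b (by omega)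
  obtain ⟨γ, hγ⟩ := exists_padicInt_of_rat (p := p) c (by omega)
  have hsep : ∀ m : ℤ, |m| ≤ T → ¬ (p : ℤ_[p]) ∣ (m : ℤ_[p]) + ((x + y * σ) - (x - y * σ)) := by
    intro m hm
    have hlt : (b.den : ℤ) ^ 2 * T ^ 2 + 4 * b.num ^ 2 * |D| < p := by omega
    have := not_dvd_add_sub b hb D hD T hlt y σ hy hσ2 m hm
    convert this using 2; ring
  have hmin : ∀ k, 1 ≤ k → min (negRes (x + y * σ) k) (negRes (x - y * σ) k) ≤ negRes γ k := by
    intro k hk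
    have hpk : p ≤ p ^ k := Nat.le_self_pow (by omega) p
    obtain ⟨j, hj⟩ := exists_pow_inverse M u p k hM0 hu hpu
    obtain ⟨C, hC, hC1, hC0⟩ := exists_fract_lift c (p ^ k) ((u ^ j : ℕ) : ℤ)
      ((Int.natCast_dvd_natCast.mpr hcM).trans hj)
      ((Nat.le_ceil _).trans_lt (by exact_mod_cast (by omega : ⌈|c| * c.den⌉₊ < p ^ k)))
    obtain ⟨A, hA, hA1, -⟩ := exists_fract_lift (2 * a) (p ^ k) ((u ^ j : ℕ) : ℤ)
      ((Int.natCast_dvd_natCast.mpr haM).trans hj)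
      ((Nat.le_ceil _).trans_lt (by exact_mod_cast (by omega : ⌈|2 * a| * (2 * a).den⌉₊ < p ^ k)))
    have hx2 : (((x + y * σ) + (x - y * σ) : ℤ_[p]) : ℚ_[p]) = (2 * a : ℚ) := by
      push_cast; rw [hx]; ring
    refine min_negRes_le _ _ γ k hk A C T (dvd_sub_of_fract _ _ hx2 k _ A hA)
      (dvd_sub_of_fract _ _ hγ k _ C hC) (by exact_mod_cast hA1) (hC0 hc)
      (by exact_mod_cast hC1) ?_ hsep
    have hT : 2 * c - 2 * a ≤ T := (le_abs_self _).trans (Int.le_ceil _)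
    have hf := hcond j
    have e1 : -(u : ℚ) ^ j * c = -(((u ^ j : ℕ) : ℤ) : ℚ) * c := by push_cast; ring
    have e2 : -2 * (u : ℚ) ^ j * a = -(((u ^ j : ℕ) : ℤ) : ℚ) * (2 * a) := by push_cast; ring
    rw [e1, e2] at hf
    have hN : (0 : ℚ) ≤ (p ^ k : ℕ) := Nat.cast_nonneg _
    have : (2 * C : ℚ) ≤ A + T := by
      rw [hC, hA]
      nlinarith [mul_le_mul_of_nonneg_left hf hN]
    exact_mod_cast this
  have hprod : ∀ j : ℕ, (((x + y * σ + j) * (x - y * σ + j) : ℤ_[p]) : ℚ_[p]) =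
      ((((-(j : ℚ)) ^ 2 - 2 * a * (-(j : ℚ)) + a ^ 2 - b ^ 2 * D : ℚ)) : ℚ_[p]) := by
    intro j
    push_cast
    rw [hx, hy, hσ, ← hs]; ring
  have hprod0 : ∀ j : ℕ, (x + y * σ + j) * (x - y * σ + j) ≠ 0 := by
    intro j h0
    have h1 := hprod j
    rw [h0] at h1
    refine quadratic_ne_zero a b hb D hD (-(j : ℚ)) ?_
    exact (Rat.cast_eq_zero (α := ℚ_[p])).mp (by rw [← h1, PadicInt.coe_zero])
  have hα0 : ∀ j < n, (x + y * σ) + (j : ℤ_[p]) ≠ 0 := fun j _ => left_ne_zero_of_mul (hprod0 j)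
  have hβ0 : ∀ j < n, (x - y * σ) + (j : ℤ_[p]) ≠ 0 := fun j _ => right_ne_zero_of_mul (hprod0 j)
  have hγ0 : ∀ j < n, γ + (j : ℤ_[p]) ≠ 0 := by
    intro j _ h0
    have h1 : ((γ + j : ℤ_[p]) : ℚ_[p]) = ((c + j : ℚ) : ℚ_[p]) := by push_cast; rw [hγ]
    rw [h0] at h1
    have h2 : c + j = 0 :=
      (Rat.cast_eq_zero (α := ℚ_[p])).mp (by rw [← h1, PadicInt.coe_zero])
    exact hc ⟨-j, by omega, by push_cast; linarith⟩
  have hval := valuation_le_of_min_negRes_le _ _ γ n hα0 hβ0 hγ0 hmin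
  set P := (∏ j ∈ Finset.range n, (x + y * σ + (j : ℤ_[p]))) *
    ∏ j ∈ Finset.range n, (x - y * σ + (j : ℤ_[p])) with hP
  set Q := (∏ j ∈ Finset.range n, (γ + (j : ℤ_[p]))) *
    ∏ j ∈ Finset.range n, (1 + (j : ℤ_[p])) with hQ
  have hP0 : P ≠ 0 := mul_ne_zero (shift_prod_ne_zero _ _ hα0) (shift_prod_ne_zero _ _ hβ0)
  have hQ0 : Q ≠ 0 := by
    refine mul_ne_zero (shift_prod_ne_zero _ _ hγ0) (shift_prod_ne_zero _ _ fun j _ => ?_)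
    have : ((1 + j : ℕ) : ℤ_[p]) ≠ 0 := Nat.cast_ne_zero.mpr (by omega)
    push_cast at this; exact this
  have hnum : (P : ℚ_[p]) = ((∏ j ∈ Finset.range n,
      ((-(j : ℚ)) ^ 2 - 2 * a * (-(j : ℚ)) + a ^ 2 - b ^ 2 * D) : ℚ) : ℚ_[p]) := by
    rw [hP, ← Finset.prod_mul_distrib, Rat.cast_prod, coe_prod_range]
    exact Finset.prod_congr rfl fun j _ => hprod j
  have hden : (Q : ℚ_[p]) =
      (((ascPochhammer ℚ n).eval c * (n.factorial : ℚ) : ℚ) : ℚ_[p]) := by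
    rw [hQ, ascPochhammer_eval_eq_prod_add, ← Finset.prod_range_add_one_eq_factorial]
    push_cast
    rw [coe_prod_range, coe_prod_range]
    push_cast
    rw [hγ]
    simp only [add_comm]
  have hfinal : ((FDcoeff a b c (D : ℚ) n : ℚ) : ℚ_[p]) = (P : ℚ_[p]) / (Q : ℚ_[p]) := by
    rw [hnum, hden, ← Rat.cast_div]; rfl
  rw [← Padic.valuation_ratCast, hfinal, div_eq_mul_inv, Padic.valuation_mul
    (PadicInt.coe_ne_zero.mpr hP0) (inv_ne_zero (PadicInt.coe_ne_zero.mpr hQ0)),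
    Padic.valuation_inv, PadicInt.valuation_coe, PadicInt.valuation_coe]
  omega
end
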